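/- arXiv:1604.01283 — 2 statements merged into one kernel-verified Lean document; each statement's English description precedes it below -/
import Mathlib

section
/- Let G be a finite group, k a field, and χ a subadditive function on the finite dimensional kG-modules. Fix a set of representatives S_1, …, S_m of the isomorphism classes of simple kG-modules and define χ'(X) := Σ_{i=1}^m χ(X ⊗_k S_i). Then χ' is a subadditive function and Adloc(χ') = { X finite dimensional kG-module : X ⊗_k Y ∈ Adloc(χ) for all finite dimensional kG-modules Y }. -/
/-- The composition length of a module (the length of a composition series,
zero if none exists). -/
noncomputable def compLength (R : Type) [Ring R] (M : Type) [AddCommGroup M] [Module R M] : ℕ := by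
  classical
  exact if h : ∃ s : CompositionSeries (Submodule R M), s.head = ⊥ ∧ s.last = ⊤ then
    h.choose.length else 0

/-- A module `M` is endofinite if it has finite composition length over its
endomorphism ring, which acts on `M` by application. -/
def IsEndofinite (A : Type) [Ring A] (M : Type) [AddCommGroup M] [Module A M] : Prop :=
  IsFiniteLength (Module.End A M) M

/-- The subadditive function `χ_M` associated to a module `M`:
`χ_M(X) = ℓ_{End_A(M)} Hom_A(X, M)`, where `End_A(M)` acts by postcomposition. -/
noncomputable def chiMod (A : Type) [Ring A] (M : Type) [AddCommGroup M] [Module A M]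
    (X : Type) [AddCommGroup X] [Module A X] : ℕ :=
  compLength (Module.End A M) (X →ₗ[A] M)

/-- A subadditive function on the finite dimensional (i.e. finitely generated)
modules over a finite dimensional algebra `A`: it depends only on the isomorphism
class, is additive on direct sums, and satisfies `χ(X) + χ(Z) ≥ χ(Y)` for every
exact sequence `X → Y → Z → 0`. -/
def IsSubadditive (A : Type) [Ring A]
    (χ : (X : Type) → [AddCommGroup X] → [Module A X] → ℕ) : Prop :=
  (∀ (X Y : Type) [AddCommGroup X] [Module A X] [AddCommGroup Y] [Module A Y],
      Module.Finite A X → Module.Finite A Y →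
      (X ≃ₗ[A] Y) → χ X = χ Y) ∧
  (∀ (X Y : Type) [AddCommGroup X] [Module A X] [AddCommGroup Y] [Module A Y],
      Module.Finite A X → Module.Finite A Y →
      χ (X × Y) = χ X + χ Y) ∧
  (∀ (X Y Z : Type) [AddCommGroup X] [Module A X] [AddCommGroup Y] [Module A Y]
      [AddCommGroup Z] [Module A Z],
      Module.Finite A X → Module.Finite A Y → Module.Finite A Z →
      ∀ (f : X →ₗ[A] Y) (g : Y →ₗ[A] Z),
      Function.Exact f g → Function.Surjective g → χ Y ≤ χ X + χ Z)

/-- Membership in the additive locus `Adloc(χ)`: `Z` is finite dimensional and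
`χ(X) - χ(Y) + χ(Z) = 0` for every short exact sequence `0 → X → Y → Z → 0` of
finite dimensional modules. -/
def MemAdloc (A : Type) [Ring A]
    (χ : (X : Type) → [AddCommGroup X] → [Module A X] → ℕ)
    (Z : Type) [AddCommGroup Z] [Module A Z] : Prop :=
  Module.Finite A Z ∧
  ∀ (X Y : Type) [AddCommGroup X] [Module A X] [AddCommGroup Y] [Module A Y],
    Module.Finite A X → Module.Finite A Y →
    ∀ (f : X →ₗ[A] Y) (g : Y →ₗ[A] Z),
    Function.Injective f → Function.Exact f g → Function.Surjective g →
    χ X + χ Z = χ Y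

/-- The tensor product over `k` of two `kG`-modules, with the diagonal `G`-action. -/
noncomputable abbrev dtensor (k G : Type) [Field k] [Group G] (M N : Type)
    [AddCommGroup M] [Module (MonoidAlgebra k G) M]
    [AddCommGroup N] [Module (MonoidAlgebra k G) N] : Type :=
  ((Representation.ofModule (k := k) (G := G) M).tprod (Representation.ofModule N)).asModule

/-- The additive group structure of `dtensor` (that of the tensor product over `k`). -/
noncomputable instance instAddCommGroupDtensor (k G : Type) [Field k] [Group G] (M N : Type)
    [AddCommGroup M] [Module (MonoidAlgebra k G) M]
    [AddCommGroup N] [Module (MonoidAlgebra k G) N] : AddCommGroup (dtensor k G M N) :=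
  @TensorProduct.addCommGroup k _ (RestrictScalars k (MonoidAlgebra k G) M)
    (RestrictScalars k (MonoidAlgebra k G) N) _ _
    (RestrictScalars.module k (MonoidAlgebra k G) M) (RestrictScalars.module k (MonoidAlgebra k G) N)

/-- The `kG`-module structure of `dtensor` (Mathlib's structure on `Representation.asModule`). -/
noncomputable instance instModuleDtensor (k G : Type) [Field k] [Group G] (M N : Type)
    [AddCommGroup M] [Module (MonoidAlgebra k G) M]
    [AddCommGroup N] [Module (MonoidAlgebra k G) N] :
    @Module (MonoidAlgebra k G) (dtensor k G M N) _
      (instAddCommGroupDtensor k G M N).toAddCommMonoid :=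
  Representation.instModuleMonoidAlgebraAsModule
    ((Representation.ofModule (k := k) (G := G) M).tprod (Representation.ofModule N))

/-- A function on `kG`-modules is tensor closed if its additive locus is closed under
tensoring (over `k`, with diagonal `G`-action) with finite dimensional modules. -/
def TensorClosed (k G : Type) [Field k] [Group G]
    (χ : (X : Type) → [AddCommGroup X] → [Module (MonoidAlgebra k G) X] → ℕ) : Prop :=
  ∀ (M N : Type) [AddCommGroup M] [Module (MonoidAlgebra k G) M]
    [AddCommGroup N] [Module (MonoidAlgebra k G) N],
    MemAdloc (MonoidAlgebra k G) χ M → Module.Finite (MonoidAlgebra k G) N →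
    MemAdloc (MonoidAlgebra k G) χ (dtensor k G M N)

section
variable (k G : Type) [Field k] [Group G] {m : ℕ}

/-- `S` is a complete set of representatives of the isomorphism classes of simple
`kG`-modules. -/
def IsCompleteSetOfSimples (S : Fin m → Type)
    [∀ i, AddCommGroup (S i)] [∀ i, Module (MonoidAlgebra k G) (S i)] : Prop :=
  (∀ i, IsSimpleModule (MonoidAlgebra k G) (S i)) ∧
  (∀ i j, i ≠ j → IsEmpty (S i ≃ₗ[MonoidAlgebra k G] S j)) ∧
  (∀ (N : Type) (_ : AddCommGroup N) (_ : Module (MonoidAlgebra k G) N),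
    IsSimpleModule (MonoidAlgebra k G) N → ∃ i, Nonempty (N ≃ₗ[MonoidAlgebra k G] S i))

end

/-!
Over the field `k` the functor `- ⊗ S` is exact, and it preserves projectives because its right
adjoint `Hom(S, -)` preserves surjections. Membership of `Z` in `Adloc χ` can be tested on a single
short exact sequence `0 → K → P → Z → 0` with `P` projective, so tensoring such a sequence for `X`
with `S` shows that the additive locus of `χ(- ⊗ S)` consists of the `X` with `X ⊗ S ∈ Adloc χ`.
The defects of additivity of the `χ(- ⊗ Sᵢ)` are nonnegative, whence `Adloc χ'` is the intersection
of these loci. As `Adloc χ` is closed under extensions and every finite dimensional `Y` is an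
iterated extension of simple modules, `X ⊗ Sᵢ ∈ Adloc χ` for all `i` forces `X ⊗ Y ∈ Adloc χ`.
-/

section Exact

variable {A X Y Z K P : Type*} [Ring A] [AddCommGroup X] [Module A X] [AddCommGroup Y] [Module A Y]
  [AddCommGroup Z] [Module A Z] [AddCommGroup K] [Module A K] [AddCommGroup P] [Module A P]
  {f : X →ₗ[A] Y} {g : Y →ₗ[A] Z} {i : K →ₗ[A] P} {φ : P →ₗ[A] Y} {ψ : K →ₗ[A] X}

theorem exists_comp_eq_of_comp_eq_zero (hf : Function.Injective f) (hfg : Function.Exact f g)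
    {u : K →ₗ[A] Y} (hu : g ∘ₗ u = 0) : ∃ v : K →ₗ[A] X, f ∘ₗ v = u := by
  let u' := u.codRestrict (LinearMap.range f) fun x ↦ (hfg _).mp (LinearMap.congr_fun hu x)
  refine ⟨(LinearEquiv.ofInjective f hf).symm.toLinearMap ∘ₗ u', LinearMap.ext fun x ↦ ?_⟩
  exact congr_arg Subtype.val ((LinearEquiv.ofInjective f hf).apply_symm_apply (u' x))

theorem exact_prod_coprod_neg (hf : Function.Injective f) (hfg : Function.Exact f g)
    (hip : Function.Exact i (g ∘ₗ φ)) (hψ : f ∘ₗ ψ = φ ∘ₗ i) :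
    Function.Exact (ψ.prod i) (f.coprod (-φ)) := by
  rintro ⟨x, y⟩
  constructor
  · intro hxy
    have hfx : f x = φ y := by simpa [add_neg_eq_zero] using hxy
    obtain ⟨z, rfl⟩ := (hip y).mp (by simp [← hfx, hfg.apply_apply_eq_zero])
    have hxz : ψ z = x := hf ((LinearMap.congr_fun hψ z).trans hfx.symm)
    exact ⟨z, Prod.ext hxz rfl⟩
  · rintro ⟨z, hz⟩
    obtain ⟨rfl, rfl⟩ := Prod.mk.inj hz
    simpa [add_neg_eq_zero] using LinearMap.congr_fun hψ z

theorem surjective_coprod_neg (hfg : Function.Exact f g) (hp : Function.Surjective (g ∘ₗ φ)) :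
    Function.Surjective (f.coprod (-φ)) := fun y ↦ by
  obtain ⟨z, hz⟩ := hp (g y)
  obtain ⟨x, hx⟩ := (hfg (y - φ z)).mp (by simpa [sub_eq_zero] using hz.symm)
  exact ⟨(x, -z), by simp [hx]⟩

end Exact

section Subadditive

variable {A : Type} [Ring A] {χ : (X : Type) → [AddCommGroup X] → [Module A X] → ℕ}
  {X Z K P Z₁ Z₂ : Type} [AddCommGroup X] [Module A X] [AddCommGroup Z] [Module A Z]
  [AddCommGroup K] [Module A K] [AddCommGroup P] [Module A P]
  [AddCommGroup Z₁] [Module A Z₁] [AddCommGroup Z₂] [Module A Z₂]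

theorem IsSubadditive.eq_zero_of_subsingleton (hχ : IsSubadditive A χ) [Subsingleton X] :
    χ X = 0 := by
  have hprod : χ (X × X) = χ X + χ X := hχ.2.1 X X inferInstance inferInstance
  have hequiv : χ (X × X) = χ X :=
    hχ.1 _ _ inferInstance inferInstance (LinearEquiv.ofSubsingleton (X × X) X)
  lia

theorem MemAdloc.of_subsingleton (hχ : IsSubadditive A χ) [Subsingleton Z] : MemAdloc A χ Z := by
  refine ⟨inferInstance, fun X Y _ _ _ _ hX hY f g hf hfg _ ↦ ?_⟩
  have hf_surj : Function.Surjective f := fun y ↦ (hfg y).mp (Subsingleton.elim _ _)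
  rw [hχ.eq_zero_of_subsingleton (X := Z), add_zero]
  exact hχ.1 X Y hX hY (LinearEquiv.ofBijective f ⟨hf, hf_surj⟩)

theorem MemAdloc.of_equiv (hχ : IsSubadditive A χ) (e : Z₁ ≃ₗ[A] Z₂) (h : MemAdloc A χ Z₁) :
    MemAdloc A χ Z₂ := by
  have := h.1
  have hZ₂ : Module.Finite A Z₂ := .equiv e
  refine ⟨hZ₂, fun X Y _ _ _ _ hX hY f g hf hfg hg ↦ ?_⟩
  rw [← hχ.1 Z₁ Z₂ h.1 hZ₂ e]
  exact h.2 X Y hX hY f (e.symm.toLinearMap ∘ₗ g) hf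
    ((Function.Injective.comp_exact_iff_exact e.symm.injective).mpr hfg) (e.symm.surjective.comp hg)

theorem MemAdloc.of_exact [IsNoetherianRing A] {i : Z₁ →ₗ[A] Z} {p : Z →ₗ[A] Z₂}
    (hi : Function.Injective i) (hip : Function.Exact i p) (hp : Function.Surjective p)
    (h₁ : MemAdloc A χ Z₁) (h₂ : MemAdloc A χ Z₂) : MemAdloc A χ Z := by
  have := h₁.1
  have := h₂.1
  have hZ : Module.Finite A Z := .of_exact hip hp
  refine ⟨hZ, fun X Y _ _ _ _ hX hY f g hf hfg hg ↦ ?_⟩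
  let B := LinearMap.ker (p ∘ₗ g)
  let a : X →ₗ[A] B := f.codRestrict B fun x ↦ by simp [B, hfg.apply_apply_eq_zero]
  obtain ⟨b, hib⟩ : ∃ b : B →ₗ[A] Z₁, i ∘ₗ b = g ∘ₗ B.subtype :=
    exists_comp_eq_of_comp_eq_zero hi hip (LinearMap.ext fun y ↦ y.2)
  have ha : Function.Injective a := fun x y hxy ↦ hf (congr_arg Subtype.val hxy)
  have hb : Function.Surjective b := fun z ↦ by
    obtain ⟨y, hy⟩ := hg (i z)
    exact ⟨⟨y, by simp [B, hy, hip.apply_apply_eq_zero]⟩, hi ((LinearMap.congr_fun hib _).trans hy)⟩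
  have hab : Function.Exact a b := by
    rw [← Function.Injective.comp_exact_iff_exact hi, hib]
    exact fun y ↦ (hfg y).trans (by simp [a, Subtype.ext_iff])
  have hXZ₁ : χ X + χ Z₁ = χ B := h₁.2 X B hX inferInstance a b ha hab hb
  have hBZ₂ : χ B + χ Z₂ = χ Y := h₂.2 B Y inferInstance hY B.subtype (p ∘ₗ g) B.injective_subtype
    (LinearMap.exact_subtype_ker_map _) (hp.comp hg)
  have hZ₁Z₂ : χ Z₁ + χ Z₂ = χ Z := h₂.2 Z₁ Z h₁.1 hZ i p hi hip hp
  lia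

theorem memAdloc_of_projective_presentation (hχ : IsSubadditive A χ) [Module.Finite A K]
    [Module.Finite A P] [Module.Finite A Z] [Module.Projective A P] {i : K →ₗ[A] P}
    {p : P →ₗ[A] Z} (hip : Function.Exact i p) (hp : Function.Surjective p)
    (hadd : χ K + χ Z = χ P) : MemAdloc A χ Z := by
  refine ⟨inferInstance, fun X Y _ _ _ _ hX hY f g hf hfg hg ↦ ?_⟩
  obtain ⟨φ, rfl⟩ := Module.projective_lifting_property g p hg
  obtain ⟨ψ, hψ⟩ : ∃ ψ : K →ₗ[A] X, f ∘ₗ ψ = φ ∘ₗ i :=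
    exists_comp_eq_of_comp_eq_zero hf hfg (LinearMap.ext hip.apply_apply_eq_zero)
  have hYZ : χ Y ≤ χ X + χ Z := hχ.2.2 X Y Z hX hY inferInstance f g hfg hg
  -- The pullback of `φ : P → Y` along `f` is `K`; subadditivity of `K → X × P → Y → 0` gives the
  -- inequality opposite to `hYZ`.
  have hKY : χ (X × P) ≤ χ K + χ Y := hχ.2.2 K (X × P) Y inferInstance inferInstance hY _ _
    (exact_prod_coprod_neg hf hfg hip hψ) (surjective_coprod_neg hfg hp)
  have hXP : χ (X × P) = χ X + χ P := hχ.2.1 X P hX inferInstance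
  lia

variable {ι : Type*} [Fintype ι] {χ : ι → (X : Type) → [AddCommGroup X] → [Module A X] → ℕ}

theorem IsSubadditive.sum (hχ : ∀ i, IsSubadditive A (χ i)) :
    IsSubadditive A (fun X _ _ ↦ ∑ i, χ i X) := by
  refine ⟨fun X Y _ _ _ _ hX hY e ↦ ?_, fun X Y _ _ _ _ hX hY ↦ ?_,
    fun X Y Z _ _ _ _ _ _ hX hY hZ f g hfg hg ↦ ?_⟩
  · exact Finset.sum_congr rfl fun i _ ↦ (hχ i).1 X Y hX hY e
  · rw [← Finset.sum_add_distrib]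
    exact Finset.sum_congr rfl fun i _ ↦ (hχ i).2.1 X Y hX hY
  · rw [← Finset.sum_add_distrib]
    exact Finset.sum_le_sum fun i _ ↦ (hχ i).2.2 X Y Z hX hY hZ f g hfg hg

theorem memAdloc_sum_iff (hχ : ∀ i, IsSubadditive A (χ i)) :
    MemAdloc A (fun X _ _ ↦ ∑ i, χ i X) Z ↔ Module.Finite A Z ∧ ∀ i, MemAdloc A (χ i) Z := by
  refine ⟨fun h ↦ ⟨h.1, fun i ↦ ⟨h.1, fun X Y _ _ _ _ hX hY f g hf hfg hg ↦ ?_⟩⟩,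
    fun ⟨hZ, h⟩ ↦ ⟨hZ, fun X Y _ _ _ _ hX hY f g hf hfg hg ↦ ?_⟩⟩
  · have hle (j : ι) (_ : j ∈ Finset.univ) : χ j Y ≤ χ j X + χ j Z :=
      (hχ j).2.2 X Y Z hX hY h.1 f g hfg hg
    have hsum : ∑ j, χ j Y = ∑ j, (χ j X + χ j Z) := by
      rw [Finset.sum_add_distrib]
      exact (h.2 X Y hX hY f g hf hfg hg).symm
    exact ((Finset.sum_eq_sum_iff_of_le hle).mp hsum i (Finset.mem_univ i)).symm
  · rw [← Finset.sum_add_distrib]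
    exact Finset.sum_congr rfl fun i _ ↦ (h i).2 X Y hX hY f g hf hfg hg

end Subadditive

section GroupAlgebra

open Representation
open scoped MonoidAlgebra TensorProduct

/-- The tautological identification of a module over a monoid algebra with the module of the
representation it defines. -/
noncomputable def ofModuleAsModuleEquiv {R H : Type*} [CommSemiring R] [Monoid H] (M : Type*)
    [AddCommMonoid M] [Module R[H] M] : (ofModule (k := R) (G := H) M).asModule ≃ₗ[R[H]] M where
  toAddEquiv := (ofModule M).asModuleEquiv.toAddEquiv.trans (RestrictScalars.addEquiv R R[H] M)
  map_smul' r m := smul_ofModule_asModule M r m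

section Adjunction

variable {R H U V W Q : Type*} [CommSemiring R] [Group H]
  [AddCommMonoid U] [Module R U] [AddCommMonoid V] [Module R V] [AddCommMonoid W] [Module R W]
  {ρ : Representation R H U} {σ : Representation R H V} {τ : Representation R H W}
  [AddCommMonoid Q] [Module R Q] {υ : Representation R H Q}

/-- Currying of representation maps, one half of the adjunction between `- ⊗ σ` and
`Hom(σ, -)`. -/
noncomputable def curryIntertwining (f : (ρ.tprod σ).IntertwiningMap τ) :
    ρ.IntertwiningMap (linHom σ τ) :=
  ⟨TensorProduct.curry f.toLinearMap, fun g ↦ by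
    ext x y
    simpa using IntertwiningMap.isIntertwining _ _ f g (x ⊗ₜ[R] σ g⁻¹ y)⟩

/-- Uncurrying of representation maps, inverse to `curryIntertwining`. -/
noncomputable def uncurryIntertwining (f : ρ.IntertwiningMap (linHom σ τ)) :
    (ρ.tprod σ).IntertwiningMap τ :=
  ⟨TensorProduct.uncurry (.id R) _ _ _ f.toLinearMap, fun g ↦ TensorProduct.ext' fun x y ↦ by
    simpa using LinearMap.congr_fun (IntertwiningMap.isIntertwining _ _ f g x) (σ g y)⟩

/-- Postcomposition with a map of representations, as a map of representations. -/
def linHomCongrRight (σ : Representation R H V) (f : τ.IntertwiningMap υ) :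
    (linHom σ τ).IntertwiningMap (linHom σ υ) :=
  ⟨LinearMap.llcomp R _ _ _ f.toLinearMap, fun g ↦ by
    ext x y
    simpa using IntertwiningMap.isIntertwining _ _ f g (x (σ g⁻¹ y))⟩

theorem exists_comp_eq_of_projective_asModule [Module.Projective R[H] ρ.asModule]
    (g : τ.IntertwiningMap υ) (hg : Function.Surjective g) (h : ρ.IntertwiningMap υ) :
    ∃ l : ρ.IntertwiningMap τ, g.comp l = h := by
  obtain ⟨l, hl⟩ := Module.projective_lifting_property
    (IntertwiningMap.equivLinearMapAsModule _ _ g) (IntertwiningMap.equivLinearMapAsModule _ _ h) hg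
  exact ⟨(IntertwiningMap.equivLinearMapAsModule _ _).symm l,
    IntertwiningMap.ext <| LinearMap.ext fun x ↦ LinearMap.congr_fun hl x⟩

variable (ρ σ) in
theorem projective_tprod_asModule [Module.Projective R V] [Module.Projective R[H] ρ.asModule] :
    Module.Projective R[H] (ρ.tprod σ).asModule := by
  refine .of_lifting_property'' fun f hf ↦ ?_
  let e := ofModuleAsModuleEquiv (R := R) (H := H) ((ρ.tprod σ).asModule →₀ R[H])
  let g := (IntertwiningMap.equivLinearMapAsModule _ _).symm (f ∘ₗ e.toLinearMap)
  have hg : Function.Surjective g := hf.comp e.surjective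
  have hg' : Function.Surjective (linHomCongrRight σ g) := fun h ↦
    Module.projective_lifting_property g.toLinearMap h hg
  obtain ⟨l, hl⟩ := exists_comp_eq_of_projective_asModule _ hg' (curryIntertwining (.id _))
  have hgl : g.comp (uncurryIntertwining l) = .id _ :=
    IntertwiningMap.ext <| TensorProduct.ext' fun x y ↦
      LinearMap.congr_fun (DFunLike.congr_fun hl x) y
  exact ⟨e.toLinearMap ∘ₗ IntertwiningMap.equivLinearMapAsModule _ _ (uncurryIntertwining l),
    LinearMap.ext fun x ↦ DFunLike.congr_fun hgl x⟩

end Adjunction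

/-- A linear map over a monoid algebra as a map of representations. -/
noncomputable def intertwiningMapOfLinearMap {R H M N : Type*} [CommSemiring R] [Monoid H]
    [AddCommMonoid M] [Module R[H] M] [AddCommMonoid N] [Module R[H] N] (f : M →ₗ[R[H]] N) :
    (ofModule (k := R) (G := H) M).IntertwiningMap (ofModule N) :=
  (IntertwiningMap.equivLinearMapAsModule _ _).symm
    ((ofModuleAsModuleEquiv N).symm.toLinearMap ∘ₗ f ∘ₗ (ofModuleAsModuleEquiv M).toLinearMap)

theorem finite_asModule {R H V : Type*} [CommSemiring R] [Monoid H] [AddCommMonoid V] [Module R V]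
    (ρ : Representation R H V) [h : Module.Finite R V] : Module.Finite R[H] ρ.asModule :=
  have : Module.Finite R ρ.asModule := h
  .of_restrictScalars_finite R R[H] _

section Finite

variable {R H : Type*} [CommRing R] [Monoid H] [Finite H]

instance isNoetherianRing_monoidAlgebra [IsNoetherianRing R] : IsNoetherianRing R[H] :=
  .of_finite R _

instance isArtinianRing_monoidAlgebra [IsArtinianRing R] : IsArtinianRing R[H] :=
  .of_finite R _

end Finite

section DTensor

-- Without this, `Representation.instAddCommMonoidAsModule` shadows `instAddCommGroupDtensor`.
noncomputable local instance (k G X Y : Type) [Field k] [Group G]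
    [AddCommGroup X] [Module k[G] X] [AddCommGroup Y] [Module k[G] Y] :
    AddCommMonoid (dtensor k G X Y) :=
  AddCommGroup.toAddCommMonoid

namespace dtensor

variable {k G : Type} [Field k] [Group G] {X Y Z : Type}
  [AddCommGroup X] [Module k[G] X] [AddCommGroup Y] [Module k[G] Y] [AddCommGroup Z] [Module k[G] Z]
  (S : Type) [AddCommGroup S] [Module k[G] S]

/-- The map `f ⊗ S` for a linear map `f` over the group algebra. -/
noncomputable def rTensor (f : X →ₗ[k[G]] Y) : dtensor k G X S →ₗ[k[G]] dtensor k G Y S :=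
  IntertwiningMap.equivLinearMapAsModule _ _ ((intertwiningMapOfLinearMap f).rTensor (ofModule S))

/-- The map `S ⊗ f` for a linear map `f` over the group algebra. -/
noncomputable def lTensor (f : X →ₗ[k[G]] Y) : dtensor k G S X →ₗ[k[G]] dtensor k G S Y :=
  IntertwiningMap.equivLinearMapAsModule _ _ ((intertwiningMapOfLinearMap f).lTensor (ofModule S))

-- Instance search does not find `RestrictScalars.module` over `AddCommGroup.toAddCommMonoid`.
noncomputable local instance (M : Type) [AddCommGroup M] [Module k[G] M] :
    @Module k (RestrictScalars k k[G] M) _ AddCommGroup.toAddCommMonoid :=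
  RestrictScalars.module k k[G] M

local instance (M : Type) [AddCommGroup M] [Module k[G] M] :
    Module.Projective k (RestrictScalars k k[G] M) :=
  have : Module.Free k (RestrictScalars k k[G] M) := Module.Free.of_divisionRing ..
  .of_free

variable {f : X →ₗ[k[G]] Y} {g : Y →ₗ[k[G]] Z}

theorem rTensor_injective (hf : Function.Injective f) : Function.Injective (rTensor S f) :=
  Module.Flat.rTensor_preserves_injective_linearMap (M := RestrictScalars k k[G] S)
    (intertwiningMapOfLinearMap f).toLinearMap hf

theorem lTensor_injective (hf : Function.Injective f) : Function.Injective (lTensor S f) :=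
  Module.Flat.lTensor_preserves_injective_linearMap (M := RestrictScalars k k[G] S)
    (intertwiningMapOfLinearMap f).toLinearMap hf

theorem rTensor_surjective (hf : Function.Surjective f) : Function.Surjective (rTensor S f) :=
  LinearMap.rTensor_surjective (RestrictScalars k k[G] S)
    (g := (intertwiningMapOfLinearMap f).toLinearMap) hf

theorem lTensor_surjective (hf : Function.Surjective f) : Function.Surjective (lTensor S f) :=
  LinearMap.lTensor_surjective (RestrictScalars k k[G] S)
    (g := (intertwiningMapOfLinearMap f).toLinearMap) hf

theorem rTensor_exact (hfg : Function.Exact f g) (hg : Function.Surjective g) :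
    Function.Exact (rTensor S f) (rTensor S g) :=
  _root_.rTensor_exact (f := (intertwiningMapOfLinearMap f).toLinearMap)
    (g := (intertwiningMapOfLinearMap g).toLinearMap) (RestrictScalars k k[G] S) hfg hg

theorem lTensor_exact (hfg : Function.Exact f g) (hg : Function.Surjective g) :
    Function.Exact (lTensor S f) (lTensor S g) :=
  _root_.lTensor_exact (f := (intertwiningMapOfLinearMap f).toLinearMap)
    (g := (intertwiningMapOfLinearMap g).toLinearMap) (RestrictScalars k k[G] S) hfg hg

/-- Functoriality of `- ⊗ S` on isomorphisms. -/
noncomputable def congrLeft (e : X ≃ₗ[k[G]] Y) : dtensor k G X S ≃ₗ[k[G]] dtensor k G Y S :=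
  .ofBijective (rTensor S e.toLinearMap)
    ⟨rTensor_injective S e.injective, rTensor_surjective S e.surjective⟩

/-- Functoriality of `S ⊗ -` on isomorphisms. -/
noncomputable def congrRight (e : X ≃ₗ[k[G]] Y) : dtensor k G S X ≃ₗ[k[G]] dtensor k G S Y :=
  .ofBijective (lTensor S e.toLinearMap)
    ⟨lTensor_injective S e.injective, lTensor_surjective S e.surjective⟩

theorem rTensor_comp (g : Y →ₗ[k[G]] Z) (f : X →ₗ[k[G]] Y) :
    rTensor S (g ∘ₗ f) = rTensor S g ∘ₗ rTensor S f :=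
  LinearMap.ext <| LinearMap.rTensor_comp_apply (RestrictScalars k k[G] S)
    (intertwiningMapOfLinearMap g).toLinearMap (intertwiningMapOfLinearMap f).toLinearMap

theorem rTensor_id : rTensor S (LinearMap.id : X →ₗ[k[G]] X) = LinearMap.id :=
  LinearMap.ext <|
    LinearMap.rTensor_id_apply (RestrictScalars k k[G] S) (RestrictScalars k k[G] X)

variable (X Y) in
/-- The distributivity isomorphism `(X × Y) ⊗ S ≃ (X ⊗ S) × (Y ⊗ S)`. -/
noncomputable def prodLeft : dtensor k G (X × Y) S ≃ₗ[k[G]] dtensor k G X S × dtensor k G Y S :=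
  ((rTensor_exact S (f := .inl k[G] X Y) (g := .snd k[G] X Y) Function.Exact.inl_snd
    LinearMap.snd_surjective).splitSurjectiveEquiv
      (rTensor_injective S LinearMap.inl_injective)
      ⟨rTensor S (.inr k[G] X Y), by rw [← rTensor_comp, LinearMap.snd_comp_inr, rTensor_id]⟩).1

local instance [Finite G] [h : Module.Finite k[G] X] :
    Module.Finite k (RestrictScalars k k[G] X) :=
  letI := RestrictScalars.moduleOrig k k[G] X
  have : Module.Finite k[G] (RestrictScalars k k[G] X) := h
  .trans k[G] _

instance finite [Finite G] [Module.Finite k[G] X] [Module.Finite k[G] S] :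
    Module.Finite k[G] (dtensor k G X S) :=
  finite_asModule _

instance projective [Module.Projective k[G] X] : Module.Projective k[G] (dtensor k G X S) :=
  have : Module.Projective k[G] (ofModule (k := k) (G := G) X).asModule :=
    .of_equiv (ofModuleAsModuleEquiv X).symm
  projective_tprod_asModule _ _

theorem subsingleton [Subsingleton S] : Subsingleton (dtensor k G X S) :=
  have : Subsingleton (RestrictScalars k k[G] S) := ‹Subsingleton S›
  TensorProduct.uniqueRight.instSubsingleton

end dtensor

variable {k G : Type} [Field k] [Group G] [Finite G]
  {χ : (X : Type) → [AddCommGroup X] → [Module k[G] X] → ℕ}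
  {X S : Type} [AddCommGroup X] [Module k[G] X] [AddCommGroup S] [Module k[G] S]

theorem IsSubadditive.comp_dtensor (hχ : IsSubadditive k[G] χ) [Module.Finite k[G] S] :
    IsSubadditive k[G] (fun X _ _ ↦ χ (dtensor k G X S)) := by
  refine ⟨fun X Y _ _ _ _ hX hY e ↦ ?_, fun X Y _ _ _ _ hX hY ↦ ?_,
    fun X Y Z _ _ _ _ _ _ hX hY hZ f g hfg hg ↦ ?_⟩
  · exact hχ.1 _ _ inferInstance inferInstance (dtensor.congrLeft S e)
  · exact (hχ.1 _ _ inferInstance inferInstance (dtensor.prodLeft X Y S)).trans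
      (hχ.2.1 _ _ inferInstance inferInstance)
  · exact hχ.2.2 _ _ _ inferInstance inferInstance inferInstance _ _
      (dtensor.rTensor_exact S hfg hg) (dtensor.rTensor_surjective S hg)

theorem memAdloc_comp_dtensor_iff (hχ : IsSubadditive k[G] χ) [Module.Finite k[G] S] :
    MemAdloc k[G] (fun X _ _ ↦ χ (dtensor k G X S)) X ↔
      Module.Finite k[G] X ∧ MemAdloc k[G] χ (dtensor k G X S) := by
  refine ⟨fun h ↦ ⟨h.1, ?_⟩, fun ⟨hX, h⟩ ↦ ⟨hX, fun Y Z _ _ _ _ hY hZ f g hf hfg hg ↦ ?_⟩⟩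
  · have := h.1
    obtain ⟨n, p, hp⟩ := Module.Finite.exists_fin' k[G] X
    have hip := LinearMap.exact_subtype_ker_map p
    exact memAdloc_of_projective_presentation hχ (dtensor.rTensor_exact S hip hp)
      (dtensor.rTensor_surjective S hp)
      (h.2 _ _ inferInstance inferInstance _ p (Submodule.injective_subtype _) hip hp)
  · exact h.2 _ _ inferInstance inferInstance _ _ (dtensor.rTensor_injective S hf)
      (dtensor.rTensor_exact S hfg hg) (dtensor.rTensor_surjective S hg)

theorem memAdloc_dtensor_of_isFiniteLength (hχ : IsSubadditive k[G] χ)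
    (h : ∀ (T : Type) [AddCommGroup T] [Module k[G] T],
      IsSimpleModule k[G] T → MemAdloc k[G] χ (dtensor k G X T))
    {Y : Type} [AddCommGroup Y] [Module k[G] Y] (hY : IsFiniteLength k[G] Y) :
    MemAdloc k[G] χ (dtensor k G X Y) := by
  induction hY with
  | @of_subsingleton Y =>
    have := dtensor.subsingleton (k := k) (G := G) (X := X) Y
    exact .of_subsingleton hχ
  | @of_simple_quotient Y _ _ N _ _ ih =>
    exact .of_exact (dtensor.lTensor_injective X N.injective_subtype)
      (dtensor.lTensor_exact X (LinearMap.exact_subtype_mkQ N) N.mkQ_surjective)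
      (dtensor.lTensor_surjective X N.mkQ_surjective) ih (h _ inferInstance)

end DTensor

end GroupAlgebra

theorem statement8_general (k G : Type) [Field k] [Group G] [Finite G]
    (χ : (X : Type) → [AddCommGroup X] → [Module (MonoidAlgebra k G) X] → ℕ)
    (hχ : IsSubadditive (MonoidAlgebra k G) χ)
    {ι : Type*} [Fintype ι] (S : ι → Type)
    [∀ i, AddCommGroup (S i)] [∀ i, Module (MonoidAlgebra k G) (S i)]
    [∀ i, Module.Finite (MonoidAlgebra k G) (S i)]
    (hS : ∀ (T : Type) [AddCommGroup T] [Module (MonoidAlgebra k G) T],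
      IsSimpleModule (MonoidAlgebra k G) T → ∃ i, Nonempty (T ≃ₗ[MonoidAlgebra k G] S i)) :
    IsSubadditive (MonoidAlgebra k G) (fun X _ _ => ∑ i, χ (dtensor k G X (S i))) ∧
    ∀ (X : Type) [AddCommGroup X] [Module (MonoidAlgebra k G) X],
      MemAdloc (MonoidAlgebra k G) (fun X _ _ => ∑ i, χ (dtensor k G X (S i))) X ↔
        (Module.Finite (MonoidAlgebra k G) X ∧
          ∀ (Y : Type) (_ : AddCommGroup Y) (_ : Module (MonoidAlgebra k G) Y),
            Module.Finite (MonoidAlgebra k G) Y →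
            MemAdloc (MonoidAlgebra k G) χ (dtensor k G X Y)) := by
  have hχS (i : ι) := hχ.comp_dtensor (S := S i)
  refine ⟨.sum hχS, fun X _ _ ↦ (memAdloc_sum_iff hχS).trans (and_congr_right fun hX ↦ ?_)⟩
  simp only [memAdloc_comp_dtensor_iff hχ, hX, true_and]
  refine ⟨fun h Y _ _ _ ↦ memAdloc_dtensor_of_isFiniteLength hχ (fun T _ _ hT ↦ ?_)
    (isFiniteLength_iff_isNoetherian_isArtinian.mpr ⟨inferInstance, inferInstance⟩),
    fun h i ↦ h (S i) _ _ inferInstance⟩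
  obtain ⟨i, ⟨e⟩⟩ := hS T hT
  exact .of_equiv hχ (dtensor.congrRight X e.symm) (h i)

/-- For a subadditive function `χ` on finite dimensional `kG`-modules and
`χ'(X) := Σᵢ χ(X ⊗ Sᵢ)` (sum over the simple modules `Sᵢ`), the function `χ'` is
subadditive and `Adloc(χ')` consists of those finite dimensional `X` such that `X ⊗ Y`
lies in `Adloc(χ)` for all finite dimensional `Y`. -/
theorem statement8 (k G : Type) [Field k] [Group G] [Finite G]
    (χ : (X : Type) → [AddCommGroup X] → [Module (MonoidAlgebra k G) X] → ℕ)
    (hχ : IsSubadditive (MonoidAlgebra k G) χ)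
    (m : ℕ) (S : Fin m → Type)
    [∀ i, AddCommGroup (S i)] [∀ i, Module (MonoidAlgebra k G) (S i)]
    (hS : IsCompleteSetOfSimples k G S) :
    IsSubadditive (MonoidAlgebra k G) (fun X _ _ => ∑ i, χ (dtensor k G X (S i))) ∧
    ∀ (X : Type) [AddCommGroup X] [Module (MonoidAlgebra k G) X],
      MemAdloc (MonoidAlgebra k G) (fun X _ _ => ∑ i, χ (dtensor k G X (S i))) X ↔
        (Module.Finite (MonoidAlgebra k G) X ∧
          ∀ (Y : Type) (_ : AddCommGroup Y) (_ : Module (MonoidAlgebra k G) Y),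
            Module.Finite (MonoidAlgebra k G) Y →
            MemAdloc (MonoidAlgebra k G) χ (dtensor k G X Y)) := by
  have := hS.1
  exact statement8_general k G χ hχ S fun T _ _ ↦ hS.2.2 T _ _
end

section
/- Let k be a field of characteristic p > 0 and G a finite group. Let α : K[t]/(t^p) → KG and β : L[t]/(t^p) → LG be K- respectively L-algebra homomorphisms for field extensions K/k and L/k, with KG flat over K[t]/(t^p) via α and LG flat over L[t]/(t^p) via β. Let Δ(α) and Δ(β) be the corresponding point modules (restrictions to kG of Hom_{K[t]/(t^p)}(KG, K) and Hom_{L[t]/(t^p)}(LG, L)), assumed endofinite. Then Thick(α) = Thick(β) if and only if Adloc(χ_{Δ(α)}) = Adloc(χ_{Δ(β)}), where Thick(α) = { M finite dimensional kG-module : α^*(M ⊗_k K) is projective } and similarly for β. -/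
open Polynomial

/-- The truncated polynomial algebra `B = K[t]/(t^p)`. -/
noncomputable abbrev Bp (K : Type) [Field K] (p : ℕ) : Type :=
  AdjoinRoot ((X : K[X]) ^ p)

/-- The algebra map `B → K` sending `t` to `0`, exhibiting `K = B/(t)` as a `B`-module. -/
noncomputable def resB (K : Type) [Field K] (p : ℕ) (hp : p ≠ 0) : Bp K p →ₐ[K] K :=
  AdjoinRoot.liftAlgHom _ (Algebra.ofId K K) 0 (by simp [zero_pow hp])

/-- Base change of a `kG`-module `M` to a representation of `G` over `K`. -/
noncomputable def rhoK (k K G : Type) [Field k] [Field K] [Algebra k K] [Group G]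
    (M : Type) [AddCommGroup M] [Module (MonoidAlgebra k G) M] :
    Representation K G
      (TensorProduct k K (RestrictScalars k (MonoidAlgebra k G) M)) :=
  MonoidHom.comp
    (Module.End.baseChangeHom k K
      (RestrictScalars k (MonoidAlgebra k G) M)).toRingHom.toMonoidHom
    (Representation.ofModule M)

/-- The base-changed module `M ⊗_k K`, as a module over `KG = MonoidAlgebra K G`. -/
noncomputable abbrev MK (k K G : Type) [Field k] [Field K] [Algebra k K] [Group G]
    (M : Type) [AddCommGroup M] [Module (MonoidAlgebra k G) M] : Type :=
  (rhoK k K G M).asModule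

/-- `χ_α(M) = dim_K Hom_B(α^*(M ⊗_k K), K)`, where `α^*` is restriction along `α`. -/
noncomputable def chiAlpha (k K G : Type) [Field k] [Field K] [Algebra k K] [Group G]
    (p : ℕ) (hp : p ≠ 0) (α : Bp K p →ₐ[K] MonoidAlgebra K G)
    (M : Type) [AddCommGroup M] [Module (MonoidAlgebra k G) M] : ℕ :=
  letI : Module (Bp K p) (MK k K G M) := Module.compHom _ α.toRingHom
  letI : Module (Bp K p) K := Module.compHom K (resB K p hp).toRingHom
  haveI : SMulCommClass (Bp K p) K K :=
    ⟨fun b c x => by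
      show resB K p hp b * (c * x) = c * (resB K p hp b * x); ring⟩
  Module.finrank K ((MK k K G M) →ₗ[Bp K p] K)

/-- `M` belongs to `Thick(α)`: `M` is finite dimensional and `α^*(M ⊗_k K)` is a
projective `B`-module. -/
def MemThick (k K G : Type) [Field k] [Field K] [Algebra k K] [Group G]
    (p : ℕ) (α : Bp K p →ₐ[K] MonoidAlgebra K G)
    (M : Type) [AddCommGroup M] [Module (MonoidAlgebra k G) M] : Prop :=
  Module.Finite (MonoidAlgebra k G) M ∧
  (letI : Module (Bp K p) (MK k K G M) := Module.compHom _ α.toRingHom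
   Module.Projective (Bp K p) (MK k K G M))

section
variable (K G : Type) [Field K] [Group G] (p : ℕ) (hp : p ≠ 0)
  (α : Bp K p →ₐ[K] MonoidAlgebra K G)

/-- The coinduced module `Hom_B(KG, K)` (as a type). -/
noncomputable def CoInd : Type :=
  letI : Module (Bp K p) (MonoidAlgebra K G) := Module.compHom _ α.toRingHom
  letI : Module (Bp K p) K := Module.compHom K (resB K p hp).toRingHom
  MonoidAlgebra K G →ₗ[Bp K p] K

noncomputable instance : AddCommGroup (CoInd K G p hp α) :=
  letI : Module (Bp K p) (MonoidAlgebra K G) := Module.compHom _ α.toRingHom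
  letI : Module (Bp K p) K := Module.compHom K (resB K p hp).toRingHom
  (inferInstance : AddCommGroup (MonoidAlgebra K G →ₗ[Bp K p] K))

noncomputable instance : Module (Bp K p) (CoInd K G p hp α) :=
  letI : Module (Bp K p) (MonoidAlgebra K G) := Module.compHom _ α.toRingHom
  letI : Module (Bp K p) K := Module.compHom K (resB K p hp).toRingHom
  (inferInstance : Module (Bp K p) (MonoidAlgebra K G →ₗ[Bp K p] K))

end

section
variable (K G : Type) [Field K] [Group G] (p : ℕ) (hp : p ≠ 0)
  (α : Bp K p →ₐ[K] MonoidAlgebra K G)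

/-- Right multiplication by `x` on `KG`, as a `B`-linear map. -/
noncomputable def rmulB (x : MonoidAlgebra K G) :
    letI : Module (Bp K p) (MonoidAlgebra K G) := Module.compHom _ α.toRingHom
    MonoidAlgebra K G →ₗ[Bp K p] MonoidAlgebra K G :=
  letI : Module (Bp K p) (MonoidAlgebra K G) := Module.compHom _ α.toRingHom
  { toFun := fun y => y * x
    map_add' := fun a b => add_mul a b x
    map_smul' := fun b y => by
      show (α b * y) * x = α b * (y * x)
      rw [mul_assoc] }

/-- The action of `KG` on `Hom_B(KG, K)` given by `(x · f) y = f (y x)`,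
as a ring homomorphism into the `B`-linear endomorphisms. -/
noncomputable def coindHom :
    MonoidAlgebra K G →+* Module.End (Bp K p) (CoInd K G p hp α) where
  toFun x :=
    letI : Module (Bp K p) (MonoidAlgebra K G) := Module.compHom _ α.toRingHom
    letI : Module (Bp K p) K := Module.compHom K (resB K p hp).toRingHom
    { toFun := fun f =>
        (show MonoidAlgebra K G →ₗ[Bp K p] K from f).comp (rmulB K G p α x)
      map_add' := fun f g => LinearMap.add_comp _ _ _
      map_smul' := fun b f => LinearMap.smul_comp _ _ _ }
  map_one' := by
    letI : Module (Bp K p) (MonoidAlgebra K G) := Module.compHom _ α.toRingHom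
    letI : Module (Bp K p) K := Module.compHom K (resB K p hp).toRingHom
    refine LinearMap.ext fun f => LinearMap.ext fun y => ?_
    show (show MonoidAlgebra K G →ₗ[Bp K p] K from f) (y * 1) =
      (show MonoidAlgebra K G →ₗ[Bp K p] K from f) y
    rw [mul_one]
  map_mul' x₁ x₂ := by
    letI : Module (Bp K p) (MonoidAlgebra K G) := Module.compHom _ α.toRingHom
    letI : Module (Bp K p) K := Module.compHom K (resB K p hp).toRingHom
    refine LinearMap.ext fun f => LinearMap.ext fun y => ?_
    show (show MonoidAlgebra K G →ₗ[Bp K p] K from f) (y * (x₁ * x₂)) =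
      (show MonoidAlgebra K G →ₗ[Bp K p] K from f) ((y * x₁) * x₂)
    rw [mul_assoc]
  map_zero' := by
    letI : Module (Bp K p) (MonoidAlgebra K G) := Module.compHom _ α.toRingHom
    letI : Module (Bp K p) K := Module.compHom K (resB K p hp).toRingHom
    refine LinearMap.ext fun f => LinearMap.ext fun y => ?_
    show (show MonoidAlgebra K G →ₗ[Bp K p] K from f) (y * 0) = 0
    rw [mul_zero, map_zero]
  map_add' x₁ x₂ := by
    letI : Module (Bp K p) (MonoidAlgebra K G) := Module.compHom _ α.toRingHom
    letI : Module (Bp K p) K := Module.compHom K (resB K p hp).toRingHom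
    refine LinearMap.ext fun f => LinearMap.ext fun y => ?_
    show (show MonoidAlgebra K G →ₗ[Bp K p] K from f) (y * (x₁ + x₂)) =
      (show MonoidAlgebra K G →ₗ[Bp K p] K from f) (y * x₁) +
      (show MonoidAlgebra K G →ₗ[Bp K p] K from f) (y * x₂)
    rw [mul_add, map_add]

/-- The `KG`-module structure on the coinduced module `Hom_B(KG, K)`. -/
noncomputable instance : Module (MonoidAlgebra K G) (CoInd K G p hp α) :=
  Module.compHom _ (coindHom K G p hp α)

end

section
variable (k K G : Type) [Field k] [Field K] [Algebra k K] [Group G] (p : ℕ) (hp : p ≠ 0)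
  (α : Bp K p →ₐ[K] MonoidAlgebra K G)

/-- The canonical ring homomorphism `kG → KG`. -/
noncomputable def kGMap : MonoidAlgebra k G →+* MonoidAlgebra K G :=
  MonoidAlgebra.liftNCRingHom (algebraMap k (MonoidAlgebra K G)) (MonoidAlgebra.of K G)
    (fun x y => Algebra.commutes x _)

/-- The point module `Δ_G(α)`: the coinduced module `Hom_B(KG, K)` viewed as a
`kG`-module by restriction along `kG → KG`. -/
noncomputable instance deltaModule : Module (MonoidAlgebra k G) (CoInd K G p hp α) :=
  Module.compHom _ (kGMap k K G)

end

/-!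
In fact `Thick(α) = Adloc(χ_Δ(α))` for each point `α` separately. As `Δ(α)` is endofinite,
`χ_Δ(α)` is additive on `0 → X → Y → Z → 0` exactly when every map `X → Δ(α)` extends to `Y`. Put
`B = K[t]/(t^p)`. Since `Δ(α)` is the restriction of a coinduced module, there is a natural
bijection `Hom_kG(M, Δ(α)) ≃ Hom_B(α^*(M ⊗_k K), K)`, and the condition becomes that every
`B`-linear map `α^*(X ⊗_k K) → K` extends to `α^*(Y ⊗_k K)`. If `α^*(Z ⊗_k K)` is projective, the
sequence of `B`-modules splits and all maps extend. Conversely, apply the condition to a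
presentation of `Z` by a free `kG`-module `Y`: then `α^*(Y ⊗_k K)` is free by flatness of `KG`,
the dual of the extension property says that `α^*(X ⊗_k K) → α^*(Y ⊗_k K)` stays injective modulo
the maximal ideal of the local ring `B`, and therefore its cokernel `α^*(Z ⊗_k K)` is free.
-/

section Length

theorem compLength_eq_length {R M : Type} [Ring R] [AddCommGroup M] [Module R M]
    (h : IsFiniteLength R M) : (compLength R M : ℕ∞) = Module.length R M := by
  have hs := isFiniteLength_iff_exists_compositionSeries.mp h
  rw [compLength, dif_pos hs]
  exact Module.length_compositionSeries _ hs.choose_spec.1 hs.choose_spec.2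

variable {R N M P : Type*} [Ring R] [AddCommGroup N] [Module R N] [AddCommGroup M] [Module R M]
  [AddCommGroup P] [Module R P]

theorem length_add_length_eq_iff_surjective (hN : IsFiniteLength R N) (hP : IsFiniteLength R P)
    {f : N →ₗ[R] M} {g : M →ₗ[R] P} (hf : Function.Injective f) (h : Function.Exact f g) :
    Module.length R N + Module.length R P = Module.length R M ↔ Function.Surjective g := by
  obtain ⟨_, _⟩ := isFiniteLength_iff_isNoetherian_isArtinian.mp hP
  have hM : Module.length R M = Module.length R N + Module.length R (LinearMap.range g) :=
    Module.length_eq_add_of_exact f g.rangeRestrict hf g.surjective_rangeRestrict <|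
      LinearMap.exact_iff.mpr <| g.ker_rangeRestrict.trans <| LinearMap.exact_iff.mp h
  rw [hM, (ENat.add_right_injective_of_ne_top (Module.length_ne_top_iff.mpr hN)).eq_iff,
    ← LinearMap.range_eq_top]
  refine ⟨fun hlen => ?_, fun htop => by rw [htop, Module.length_top]⟩
  by_contra hne
  exact (Submodule.length_lt hne).ne hlen.symm

end Length

section Hom

variable {A : Type*} [Ring A] {D X Y Z : Type*} [AddCommGroup D] [Module A D]
  [AddCommGroup X] [Module A X] [AddCommGroup Y] [Module A Y] [AddCommGroup Z] [Module A Z]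

theorem isFiniteLength_linearMap_of_finite {S : Type*} [Ring S] [Module S D] [SMulCommClass A S D]
    (hD : IsFiniteLength S D) [Module.Finite A X] : IsFiniteLength S (X →ₗ[A] D) := by
  obtain ⟨n, s, hs⟩ := Module.Finite.exists_fin (R := A) (M := X)
  obtain ⟨_, _⟩ := isFiniteLength_iff_isNoetherian_isArtinian.mp hD
  have hpi : IsFiniteLength S (Fin n → D) :=
    isFiniteLength_iff_isNoetherian_isArtinian.mpr ⟨inferInstance, inferInstance⟩
  let evalGenerators : (X →ₗ[A] D) →ₗ[S] Fin n → D :=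
    { toFun φ i := φ (s i), map_add' _ _ := rfl, map_smul' _ _ := rfl }
  exact hpi.of_injective (f := evalGenerators) fun φ ψ h =>
    LinearMap.ext_on_range hs fun i => congrFun h i

theorem exact_lcomp {S : Type*} [Semiring S] [Module S D] [SMulCommClass A S D]
    {f : X →ₗ[A] Y} {g : Y →ₗ[A] Z} (h : Function.Exact f g) (hg : Function.Surjective g) :
    Function.Exact (LinearMap.lcomp S D g) (LinearMap.lcomp S D f) := by
  refine fun φ => ⟨fun hφ => ?_, ?_⟩
  · have hker : LinearMap.ker g ≤ LinearMap.ker φ := by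
      rw [LinearMap.exact_iff.mp h]
      exact LinearMap.range_le_ker_iff.mpr hφ
    refine ⟨(LinearMap.ker g).liftQ φ hker ∘ₗ (g.quotKerEquivOfSurjective hg).symm, ?_⟩
    ext y
    have hy : (g.quotKerEquivOfSurjective hg).symm (g y) = Submodule.Quotient.mk y := by
      rw [LinearEquiv.symm_apply_eq]
      rfl
    simp [hy]
  · rintro ⟨ψ, rfl⟩
    ext x
    simp [h.apply_apply_eq_zero]

theorem exists_comp_eq_of_projective [Module.Projective A Z] {f : X →ₗ[A] Y} {g : Y →ₗ[A] Z}
    (hf : Function.Injective f) (h : Function.Exact f g) (hg : Function.Surjective g)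
    (φ : X →ₗ[A] D) : ∃ ψ : Y →ₗ[A] D, ψ ∘ₗ f = φ := by
  have split := h.split_tfae'.out 0 1
  obtain ⟨-, l, hl⟩ := split.mp ⟨hf, Module.projective_lifting_property g LinearMap.id hg⟩
  exact ⟨φ ∘ₗ l, by rw [LinearMap.comp_assoc, hl, LinearMap.comp_id]⟩

end Hom

theorem chiMod_add_eq_iff {A D X Y Z : Type} [Ring A] [AddCommGroup D] [Module A D]
    [AddCommGroup X] [Module A X] [AddCommGroup Y] [Module A Y] [AddCommGroup Z] [Module A Z]
    [Module.Finite A X] [Module.Finite A Y] [Module.Finite A Z]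
    (hD : IsFiniteLength (Module.End A D) D) {f : X →ₗ[A] Y} {g : Y →ₗ[A] Z}
    (h : Function.Exact f g) (hg : Function.Surjective g) :
    chiMod A D X + chiMod A D Z = chiMod A D Y ↔
      ∀ φ : X →ₗ[A] D, ∃ ψ : Y →ₗ[A] D, ψ ∘ₗ f = φ := by
  have hX := isFiniteLength_linearMap_of_finite (A := A) (X := X) hD
  have hY := isFiniteLength_linearMap_of_finite (A := A) (X := Y) hD
  have hZ := isFiniteLength_linearMap_of_finite (A := A) (X := Z) hD
  rw [← Nat.cast_inj (R := ℕ∞), Nat.cast_add, chiMod, chiMod, chiMod, compLength_eq_length hX,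
    compLength_eq_length hY, compLength_eq_length hZ, add_comm]
  exact length_add_length_eq_iff_surjective hZ hX
    (LinearMap.lcomp_injective_of_surjective g hg) (exact_lcomp h hg)

section LocalRing

open TensorProduct

variable {R : Type*} [CommRing R] {X F Z : Type*} [AddCommGroup X] [Module R X]
  [AddCommGroup F] [Module R F] [AddCommGroup Z] [Module R Z]

theorem lTensor_injective_of_forall_exists_comp_eq (κ : Type*) [Field κ] [Algebra R κ]
    {f : X →ₗ[R] F} (H : ∀ φ : X →ₗ[R] κ, ∃ ψ : F →ₗ[R] κ, ψ ∘ₗ f = φ) :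
    Function.Injective (f.lTensor κ) := by
  change Function.Injective (f.baseChange κ)
  refine LinearMap.dualMap_surjective_iff.mp fun φ => ?_
  obtain ⟨ψ, hψ⟩ := H ((LinearMap.liftBaseChangeEquiv κ).symm φ)
  refine ⟨ψ.liftBaseChange κ, ?_⟩
  ext x
  simpa using LinearMap.congr_fun hψ x

theorem exists_comp_eq_of_linearEquiv {S T : Type*} [AddCommGroup S] [Module R S] [AddCommGroup T]
    [Module R T] (e : S ≃ₗ[R] T) {f : X →ₗ[R] F}
    (H : ∀ φ : X →ₗ[R] S, ∃ ψ : F →ₗ[R] S, ψ ∘ₗ f = φ) (φ : X →ₗ[R] T) :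
    ∃ ψ : F →ₗ[R] T, ψ ∘ₗ f = φ := by
  obtain ⟨ψ, hψ⟩ := H (e.symm ∘ₗ φ)
  refine ⟨e ∘ₗ ψ, ?_⟩
  rw [LinearMap.comp_assoc, hψ, ← LinearMap.comp_assoc, LinearEquiv.comp_symm, LinearMap.id_comp]

theorem projective_of_forall_exists_comp_eq [IsLocalRing R] {S : Type*} [AddCommGroup S]
    [Module R S] [IsSimpleModule R S] [Module.Finite R X] [Module.Finite R F]
    [Module.Projective R F] {f : X →ₗ[R] F} {g : F →ₗ[R] Z} (h : Function.Exact f g)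
    (hg : Function.Surjective g) (H : ∀ φ : X →ₗ[R] S, ∃ ψ : F →ₗ[R] S, ψ ∘ₗ f = φ) :
    Module.Projective R Z := by
  obtain ⟨I, hI, ⟨e⟩⟩ := isSimpleModule_iff_quot_maximal.mp ‹IsSimpleModule R S›
  obtain rfl := IsLocalRing.eq_maximalIdeal hI
  have : Module.Free R F := Module.free_of_flat_of_isLocalRing
  have : Module.Free R Z := Module.free_of_lTensor_residueField_injective f g hg h <|
    lTensor_injective_of_forall_exists_comp_eq (IsLocalRing.ResidueField R)
      (exists_comp_eq_of_linearEquiv e H)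
  infer_instance

end LocalRing

section TruncatedPolynomial

variable (K : Type) [Field K] (p : ℕ) (hp : p ≠ 0)

theorem resB_mk (q : K[X]) : resB K p hp (AdjoinRoot.mk _ q) = q.eval 0 := by
  rw [resB, AdjoinRoot.liftAlgHom_mk]
  rfl

theorem resB_surjective : Function.Surjective (resB K p hp) := fun c =>
  ⟨algebraMap K _ c, (resB K p hp).commutes c⟩

theorem ker_resB : RingHom.ker (resB K p hp) = nilradical (Bp K p) := by
  have := RingHom.ker_isPrime (resB K p hp)
  refine le_antisymm (fun b hb => ?_) (nilradical_le_prime _)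
  obtain ⟨q, rfl⟩ := AdjoinRoot.mk_surjective b
  rw [RingHom.mem_ker, resB_mk, ← coeff_zero_eq_eval_zero, ← X_dvd_iff] at hb
  refine mem_nilradical.mpr ⟨p, ?_⟩
  rw [← map_pow, AdjoinRoot.mk_eq_zero]
  exact pow_dvd_pow_of_dvd hb p

variable {p} in
theorem isLocalRing_Bp (hp : p ≠ 0) : IsLocalRing (Bp K p) :=
  have : (nilradical (Bp K p)).IsMaximal :=
    ker_resB K p hp ▸ RingHom.ker_isMaximal_of_surjective _ (resB_surjective K p hp)
  IsLocalRing.of_isMaximal_nilradical _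

end TruncatedPolynomial

/-- The `R`-module obtained from an `S`-module by restriction of scalars along a ring homomorphism
`φ : R →+* S`. It is a type synonym recording `φ`, so that it can be used between noncommutative
rings and does not clash with other module structures. -/
def RestrictAlong {R S : Type*} [Semiring R] [Semiring S] (_ : R →+* S) (M : Type*) : Type _ := M

namespace RestrictAlong

variable {R S : Type*} [Ring R] [Ring S] (φ : R →+* S) {M N : Type*} [AddCommGroup M]
  [Module S M] [AddCommGroup N] [Module S N]

instance : AddCommGroup (RestrictAlong φ M) := inferInstanceAs (AddCommGroup M)

instance : Module R (RestrictAlong φ M) := Module.compHom M φ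

variable (M) in
/-- The identity of `M`, as an additive equivalence with its restriction of scalars. -/
def of : M ≃+ RestrictAlong φ M := AddEquiv.refl M

/-- Restriction of scalars on morphisms. -/
def map (f : M →ₗ[S] N) : RestrictAlong φ M →ₗ[R] RestrictAlong φ N where
  toFun := f
  map_add' := f.map_add
  map_smul' r := f.map_smul (φ r)

variable {φ} in
theorem isSimpleModule (hφ : Function.Surjective φ) [IsSimpleModule S M] :
    IsSimpleModule R (RestrictAlong φ M) :=
  have : RingHomSurjective φ := ⟨hφ⟩
  let ofₛₗ : RestrictAlong φ M →ₛₗ[φ] M :=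
    { (of φ M).symm with map_smul' := fun _ _ => rfl }
  (LinearMap.isSimpleModule_iff_of_bijective ofₛₗ (of φ M).symm.bijective).mpr ‹_›

theorem finite_of_algHom {K R S M : Type*} [CommRing K] [Ring R] [Ring S] [Algebra K R]
    [Algebra K S] (φ : R →ₐ[K] S) [AddCommGroup M] [Module S M] [Module K M] [IsScalarTower K S M]
    [Module.Finite K M] : Module.Finite R (RestrictAlong φ.toRingHom M) := by
  let : Module K (RestrictAlong φ.toRingHom M) := inferInstanceAs (Module K M)
  have : Module.Finite K (RestrictAlong φ.toRingHom M) := inferInstanceAs (Module.Finite K M)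
  have : IsScalarTower K R (RestrictAlong φ.toRingHom M) := ⟨fun c r m => by
    change φ (c • r) • (of φ.toRingHom M).symm m = c • φ r • (of φ.toRingHom M).symm m
    rw [map_smul, smul_assoc]⟩
  exact .of_restrictScalars_finite K R _

theorem projective [hS : Module.Projective R (RestrictAlong φ S)] [hM : Module.Projective S M] :
    Module.Projective R (RestrictAlong φ M) := by
  classical
  obtain ⟨s, hs⟩ := Module.projective_def'.mp hM
  let e : RestrictAlong φ (M →₀ S) ≃ₗ[R] M →₀ RestrictAlong φ S :=
    { AddEquiv.refl (M →₀ S) with map_smul' := fun _ _ => rfl }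
  have : Module.Projective R (RestrictAlong φ (M →₀ S)) :=
    .of_equiv (e.trans (finsuppLequivDFinsupp R)).symm
  exact .of_split (map φ s) (map φ (Finsupp.linearCombination S id))
    (LinearMap.ext fun m => LinearMap.congr_fun hs m)

end RestrictAlong

/-- The module coinduced from an `R`-module `T` along `φ : R →+* S`: the group `Hom_R(S, T)`, on
which `S` acts by `(s • f) y = f (y * s)`. -/
def Coinduced {R S : Type*} [Ring R] [Ring S] (φ : R →+* S) (T : Type*) [AddCommGroup T]
    [Module R T] : Type _ :=
  RestrictAlong φ S →ₗ[R] T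

namespace Coinduced

variable {R S : Type*} [Ring R] [Ring S] (φ : R →+* S) {T N N' : Type*} [AddCommGroup T]
  [Module R T] [AddCommGroup N] [Module S N] [AddCommGroup N'] [Module S N']

instance : AddCommGroup (Coinduced φ T) :=
  inferInstanceAs (AddCommGroup (RestrictAlong φ S →ₗ[R] T))

instance : FunLike (Coinduced φ T) S T :=
  inferInstanceAs (FunLike (RestrictAlong φ S →ₗ[R] T) (RestrictAlong φ S) T)

instance : AddMonoidHomClass (Coinduced φ T) S T :=
  inferInstanceAs (AddMonoidHomClass (RestrictAlong φ S →ₗ[R] T) (RestrictAlong φ S) T)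

variable {φ}

@[ext]
theorem ext {f g : Coinduced φ T} (h : ∀ y : S, f y = g y) : f = g := DFunLike.ext f g h

theorem map_mul_left (f : Coinduced φ T) (r : R) (y : S) : f (φ r * y) = r • f y :=
  LinearMap.map_smul (M := RestrictAlong φ S) f r y

instance : Module S (Coinduced φ T) where
  smul s f := LinearMap.comp f (RestrictAlong.map φ (LinearMap.toSpanSingleton S S s))
  one_smul f := ext fun y => congrArg f (mul_one y)
  mul_smul s t f := ext fun y => congrArg f (mul_assoc y s t).symm
  smul_zero _ := rfl
  smul_add _ _ _ := rfl
  add_smul s t f := ext fun y => (congrArg f (mul_add y s t)).trans (map_add f _ _)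
  zero_smul f := ext fun y => (congrArg f (mul_zero y)).trans (map_zero f)

theorem smul_apply (s : S) (f : Coinduced φ T) (y : S) : (s • f) y = f (y * s) := rfl

theorem add_apply (f g : Coinduced φ T) (y : S) : (f + g) y = f y + g y := rfl

/-- The adjunction between restriction of scalars and coinduction. -/
def homEquiv : (N →ₗ[S] Coinduced φ T) ≃ (RestrictAlong φ N →ₗ[R] T) where
  toFun u :=
    { toFun n := u ((RestrictAlong.of φ N).symm n) 1
      map_add' m n := by rw [map_add, map_add, add_apply]
      map_smul' r n := by
        change u (φ r • (RestrictAlong.of φ N).symm n) 1 = _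
        rw [map_smul, smul_apply, one_mul, ← mul_one (φ r), map_mul_left, RingHom.id_apply] }
  invFun v :=
    { toFun n := v ∘ₗ RestrictAlong.map φ (LinearMap.toSpanSingleton S N n)
      map_add' m n := ext fun y =>
        (congrArg v (smul_add (M := S) (A := N) y m n)).trans (v.map_add _ _)
      map_smul' s n := ext fun y => congrArg v (smul_smul (M := S) (α := N) y s n) }
  left_inv u := LinearMap.ext fun n => ext fun y => by
    change u (y • n) 1 = u n y
    rw [map_smul, smul_apply, one_mul]
  right_inv v := LinearMap.ext fun n => congrArg v (one_smul S (α := N) n)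

theorem homEquiv_comp (u : N' →ₗ[S] Coinduced φ T) (f : N →ₗ[S] N') :
    homEquiv (u ∘ₗ f) = homEquiv u ∘ₗ RestrictAlong.map φ f := rfl

end Coinduced

/-- The `KG`-module `M ⊗_k K`. It is the module `MK k K G M`, presented as a tensor product of
`RestrictAlong` so that all of its structures are built on one additive group. -/
def BaseChange (k K G M : Type) [Field k] [Field K] [Algebra k K] [Group G] [AddCommGroup M]
    [Module (MonoidAlgebra k G) M] : Type :=
  TensorProduct k K (RestrictAlong (algebraMap k (MonoidAlgebra k G)) M)

namespace BaseChange

variable {k K G : Type} [Field k] [Field K] [Algebra k K] [Group G] {M N P : Type}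
  [AddCommGroup M] [Module (MonoidAlgebra k G) M] [AddCommGroup N] [Module (MonoidAlgebra k G) N]
  [AddCommGroup P] [Module (MonoidAlgebra k G) P]
  {L : Type} [AddCommGroup L] [Module (MonoidAlgebra K G) L]

theorem kGMap_single (g : G) (r : k) :
    kGMap k K G (MonoidAlgebra.single g r) = MonoidAlgebra.single g (algebraMap k K r) := by
  simp [kGMap, MonoidAlgebra.liftNCRingHom]

theorem kGMap_algebraMap (r : k) : kGMap k K G (algebraMap k (MonoidAlgebra k G) r) =
    algebraMap K (MonoidAlgebra K G) (algebraMap k K r) :=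
  kGMap_single 1 r

noncomputable instance : AddCommGroup (BaseChange k K G M) :=
  inferInstanceAs (AddCommGroup (TensorProduct k K (RestrictAlong (algebraMap k _) M)))

noncomputable instance : Module K (BaseChange k K G M) :=
  inferInstanceAs (Module K (TensorProduct k K (RestrictAlong (algebraMap k _) M)))

noncomputable instance : Module (MonoidAlgebra K G) (BaseChange k K G M) :=
  inferInstanceAs (Module (MonoidAlgebra K G) (MK k K G M))

instance : IsScalarTower K (MonoidAlgebra K G) (BaseChange k K G M) :=
  inferInstanceAs (IsScalarTower K (MonoidAlgebra K G) (MK k K G M))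

variable (k K G) in
/-- The pure tensor `c ⊗ m`. -/
noncomputable def tmul (c : K) (m : M) : BaseChange k K G M :=
  TensorProduct.tmul k c (RestrictAlong.of (algebraMap k (MonoidAlgebra k G)) M m)

@[elab_as_elim]
theorem induction_on {motive : BaseChange k K G M → Prop} (x : BaseChange k K G M)
    (zero : motive 0) (tmul : ∀ c m, motive (tmul k K G c m))
    (add : ∀ x y, motive x → motive y → motive (x + y)) : motive x :=
  TensorProduct.induction_on x zero tmul add

theorem tmul_add (c : K) (m n : M) : tmul k K G c (m + n) = tmul k K G c m + tmul k K G c n :=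
  TensorProduct.tmul_add ..

theorem tmul_algebraMap_smul (r : k) (c : K) (m : M) :
    tmul k K G c (algebraMap k (MonoidAlgebra k G) r • m) =
      tmul k K G (c * algebraMap k K r) m := by
  rw [mul_comm, ← Algebra.smul_def]
  exact (TensorProduct.smul_tmul r c (RestrictAlong.of (algebraMap k (MonoidAlgebra k G)) M m)).symm

theorem single_smul_tmul (g : G) (c d : K) (m : M) :
    (MonoidAlgebra.single g c : MonoidAlgebra K G) • tmul k K G d m =
      tmul k K G (c * d) ((MonoidAlgebra.single g 1 : MonoidAlgebra k G) • m) :=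
  Representation.single_smul (ρ := rhoK k K G M) c g _

theorem algebraMap_smul_tmul (c d : K) (m : M) :
    algebraMap K (MonoidAlgebra K G) c • tmul k K G d m = tmul k K G (c * d) m := by
  refine (single_smul_tmul 1 c d m).trans ?_
  rw [← MonoidAlgebra.one_def, one_smul]

variable (k K G M) in
/-- The canonical map `m ↦ 1 ⊗ m`. -/
noncomputable def ι : M →ₗ[MonoidAlgebra k G] RestrictAlong (kGMap k K G) (BaseChange k K G M) where
  toFun m := tmul k K G 1 m
  map_add' := tmul_add 1
  map_smul' a m := by
    change tmul k K G 1 (a • m) = kGMap k K G a • tmul k K G 1 m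
    induction a using MonoidAlgebra.induction_linear with
    | zero =>
      rw [map_zero, zero_smul, zero_smul]
      exact TensorProduct.tmul_zero _ _
    | add a b ha hb => rw [map_add, add_smul, add_smul, tmul_add, ha, hb]
    | single g r =>
      rw [kGMap_single, single_smul_tmul, mul_comm, ← tmul_algebraMap_smul, smul_smul]
      simp

theorem hom_ext {u v : BaseChange k K G M →ₗ[MonoidAlgebra K G] L}
    (h : RestrictAlong.map (kGMap k K G) u ∘ₗ ι k K G M =
      RestrictAlong.map (kGMap k K G) v ∘ₗ ι k K G M) : u = v := by
  ext x
  induction x using induction_on with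
  | zero => rw [map_zero, map_zero]
  | tmul c m =>
    rw [← mul_one c, ← algebraMap_smul_tmul, map_smul, map_smul]
    exact congrArg (_ • ·) (LinearMap.congr_fun h m)
  | add x y hx hy => rw [map_add, map_add, hx, hy]

/-- The universal property of base change: a `kG`-linear map from `M` to a `KG`-module extends to
`M ⊗_k K`. -/
noncomputable def lift (φ : M →ₗ[MonoidAlgebra k G] RestrictAlong (kGMap k K G) L) :
    BaseChange k K G M →ₗ[MonoidAlgebra K G] L :=
  letI : Module K L := Module.compHom L (algebraMap K (MonoidAlgebra K G))
  letI : Module k L := Module.compHom L (algebraMap k K)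
  haveI : IsScalarTower k K L := ⟨fun r c x => by
    rw [Algebra.smul_def, mul_smul]; rfl⟩
  haveI : IsScalarTower K (MonoidAlgebra K G) L := .of_algebraMap_smul fun _ _ => rfl
  let φₛₗ : M →ₛₗ[kGMap k K G] L := { φ with map_smul' := φ.map_smul }
  let φₖ : RestrictAlong (algebraMap k (MonoidAlgebra k G)) M →ₗ[k] L :=
    { φₛₗ with
      map_smul' r m := (φₛₗ.map_smulₛₗ (algebraMap k (MonoidAlgebra k G) r) m).trans <|
        congrArg (· • φₛₗ m) (kGMap_algebraMap r) }
  let F : BaseChange k K G M →ₗ[K] L := φₖ.liftBaseChange K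
  MonoidAlgebra.equivariantOfLinearOfComm F fun g x => by
    induction x using induction_on with
    | zero => rw [smul_zero, map_zero, smul_zero]
    | tmul c m =>
      have F_tmul (d : K) (n : M) : F (tmul k K G d n) =
          algebraMap K (MonoidAlgebra K G) d • φₛₗ n := rfl
      rw [single_smul_tmul, one_mul, F_tmul, F_tmul, φₛₗ.map_smulₛₗ, kGMap_single, map_one,
        smul_smul, smul_smul, Algebra.commutes]
    | add x y hx hy => rw [smul_add, map_add, hx, hy, map_add, smul_add]

theorem map_lift_comp_ι (φ : M →ₗ[MonoidAlgebra k G] RestrictAlong (kGMap k K G) L) :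
    RestrictAlong.map (kGMap k K G) (lift φ) ∘ₗ ι k K G M = φ :=
  LinearMap.ext fun m => by
    change algebraMap K (MonoidAlgebra K G) 1 • (RestrictAlong.of _ L).symm (φ m) = φ m
    rw [map_one, one_smul]
    rfl

/-- The adjunction between base change and restriction of scalars along `kG → KG`. -/
noncomputable def homEquiv : (M →ₗ[MonoidAlgebra k G] RestrictAlong (kGMap k K G) L) ≃
    (BaseChange k K G M →ₗ[MonoidAlgebra K G] L) where
  toFun := lift
  invFun u := RestrictAlong.map (kGMap k K G) u ∘ₗ ι k K G M
  left_inv := map_lift_comp_ι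
  right_inv _ := hom_ext (map_lift_comp_ι _)

variable (K) in
/-- Base change of morphisms. -/
noncomputable def map (f : M →ₗ[MonoidAlgebra k G] N) :
    BaseChange k K G M →ₗ[MonoidAlgebra K G] BaseChange k K G N :=
  lift (ι k K G N ∘ₗ f)

theorem homEquiv_comp (φ : N →ₗ[MonoidAlgebra k G] RestrictAlong (kGMap k K G) L)
    (f : M →ₗ[MonoidAlgebra k G] N) : homEquiv (φ ∘ₗ f) = homEquiv φ ∘ₗ map K f := by
  refine homEquiv.symm.injective ?_
  rw [Equiv.symm_apply_apply]
  change _ = RestrictAlong.map _ (lift φ) ∘ₗ RestrictAlong.map _ (map K f) ∘ₗ ι k K G M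
  rw [map, map_lift_comp_ι, ← LinearMap.comp_assoc, map_lift_comp_ι]

theorem coe_map (f : M →ₗ[MonoidAlgebra k G] N) :
    ⇑(map K f) = (RestrictAlong.map (algebraMap k (MonoidAlgebra k G)) f).lTensor K := by
  ext x
  induction x using induction_on with
  | zero => exact (map_zero (map K f)).trans (map_zero _).symm
  | tmul c m =>
    refine (algebraMap_smul_tmul c 1 (f m)).trans ?_
    rw [mul_one]
    rfl
  | add x y hx hy =>
    exact (map_add (map K f) x y).trans <| (congrArg₂ _ hx hy).trans (map_add _ x y).symm

theorem map_injective {f : M →ₗ[MonoidAlgebra k G] N} (hf : Function.Injective f) :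
    Function.Injective (map K f) := by
  rw [coe_map]
  exact Module.Flat.lTensor_preserves_injective_linearMap _ hf

theorem map_surjective {f : M →ₗ[MonoidAlgebra k G] N} (hf : Function.Surjective f) :
    Function.Surjective (map K f) := by
  rw [coe_map]
  exact LinearMap.lTensor_surjective K hf

theorem map_exact {f : M →ₗ[MonoidAlgebra k G] N} {g : N →ₗ[MonoidAlgebra k G] P}
    (h : Function.Exact f g) (hg : Function.Surjective g) :
    Function.Exact (map K f) (map K g) := by
  rw [coe_map, coe_map]
  exact lTensor_exact K h hg

variable (k K G M) in
theorem finite [Finite G] [hM : Module.Finite (MonoidAlgebra k G) M] :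
    Module.Finite K (BaseChange k K G M) := by
  have : Module.Finite k (RestrictAlong (algebraMap k (MonoidAlgebra k G)) M) := by
    let _ : Module (MonoidAlgebra k G) (RestrictAlong (algebraMap k (MonoidAlgebra k G)) M) :=
      inferInstanceAs (Module (MonoidAlgebra k G) M)
    have : IsScalarTower k (MonoidAlgebra k G)
      (RestrictAlong (algebraMap k (MonoidAlgebra k G)) M) := .of_algebraMap_smul fun _ _ => rfl
    have : Module.Finite (MonoidAlgebra k G)
      (RestrictAlong (algebraMap k (MonoidAlgebra k G)) M) := hM
    exact .trans (MonoidAlgebra k G) _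
  exact inferInstanceAs (Module.Finite K (TensorProduct k K (RestrictAlong _ M)))

variable (k K G M) in
theorem projective [Module.Projective (MonoidAlgebra k G) M] :
    Module.Projective (MonoidAlgebra K G) (BaseChange k K G M) := by
  refine .of_lifting_property'' fun q hq => ?_
  obtain ⟨s, hs⟩ := Module.projective_lifting_property
    (RestrictAlong.map (kGMap k K G) q) (ι k K G M) hq
  refine ⟨lift s, hom_ext ?_⟩
  change RestrictAlong.map _ q ∘ₗ RestrictAlong.map _ (lift s) ∘ₗ ι k K G M = ι k K G M
  rw [map_lift_comp_ι, hs]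

end BaseChange

section PointModule

variable {k K G : Type} [Field k] [Field K] [Algebra k K] [Group G] {p : ℕ}
  (α : Bp K p →ₐ[K] MonoidAlgebra K G) {M X Y Z : Type}
  [AddCommGroup M] [Module (MonoidAlgebra k G) M] [AddCommGroup X] [Module (MonoidAlgebra k G) X]
  [AddCommGroup Y] [Module (MonoidAlgebra k G) Y] [AddCommGroup Z] [Module (MonoidAlgebra k G) Z]

variable (k M) in
theorem finite_restrictAlong_baseChange [Finite G] [Module.Finite (MonoidAlgebra k G) M] :
    Module.Finite (Bp K p) (RestrictAlong α.toRingHom (BaseChange k K G M)) :=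
  have := BaseChange.finite k K G M
  RestrictAlong.finite_of_algHom α

variable (k M) in
theorem projective_restrictAlong_baseChange [Finite G] (hp : p ≠ 0)
    [Module.Flat (Bp K p) (RestrictAlong α.toRingHom (MonoidAlgebra K G))]
    [Module.Projective (MonoidAlgebra k G) M] :
    Module.Projective (Bp K p) (RestrictAlong α.toRingHom (BaseChange k K G M)) :=
  have := isLocalRing_Bp K hp
  have := RestrictAlong.finite_of_algHom (M := MonoidAlgebra K G) α
  have : Module.Free (Bp K p) (RestrictAlong α.toRingHom (MonoidAlgebra K G)) :=
    Module.free_of_flat_of_isLocalRing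
  have := BaseChange.projective k K G M
  RestrictAlong.projective _

variable (hp : p ≠ 0)

variable (k) in
/-- The point module `Δ(α)` as the restriction to `kG` of a coinduced module. -/
noncomputable def pointModuleEquiv : CoInd K G p hp α ≃ₗ[MonoidAlgebra k G]
    RestrictAlong (kGMap k K G)
      (Coinduced α.toRingHom (RestrictAlong (resB K p hp).toRingHom K)) where
  toFun f := f
  invFun f := f
  map_add' _ _ := rfl
  map_smul' _ _ := rfl

/-- The adjunction `Hom_kG(M, Δ(α)) ≃ Hom_B(α^*(M ⊗_k K), K)`. -/
noncomputable def pointModuleHomEquiv : (M →ₗ[MonoidAlgebra k G] CoInd K G p hp α) ≃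
    (RestrictAlong α.toRingHom (BaseChange k K G M) →ₗ[Bp K p]
      RestrictAlong (resB K p hp).toRingHom K) :=
  ((LinearEquiv.refl _ M).arrowCongrAddEquiv (pointModuleEquiv k α hp)).toEquiv.trans <|
    BaseChange.homEquiv.trans Coinduced.homEquiv

theorem pointModuleHomEquiv_comp (φ : Y →ₗ[MonoidAlgebra k G] CoInd K G p hp α)
    (f : X →ₗ[MonoidAlgebra k G] Y) : pointModuleHomEquiv α hp (φ ∘ₗ f) =
      pointModuleHomEquiv α hp φ ∘ₗ RestrictAlong.map α.toRingHom (BaseChange.map K f) :=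
  (congrArg Coinduced.homEquiv <|
    BaseChange.homEquiv_comp ((pointModuleEquiv k α hp).toLinearMap ∘ₗ φ) f).trans <|
      Coinduced.homEquiv_comp _ _

theorem forall_exists_comp_eq_pointModule_iff (f : X →ₗ[MonoidAlgebra k G] Y) :
    (∀ φ : X →ₗ[MonoidAlgebra k G] CoInd K G p hp α,
        ∃ ψ : Y →ₗ[MonoidAlgebra k G] CoInd K G p hp α, ψ ∘ₗ f = φ) ↔
      ∀ φ : RestrictAlong α.toRingHom (BaseChange k K G X) →ₗ[Bp K p]
          RestrictAlong (resB K p hp).toRingHom K,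
        ∃ ψ, ψ ∘ₗ RestrictAlong.map α.toRingHom (BaseChange.map K f) = φ :=
  (pointModuleHomEquiv α hp).forall_congr fun φ =>
    (pointModuleHomEquiv α hp).exists_congr fun ψ => by
      rw [← pointModuleHomEquiv_comp, Equiv.apply_eq_iff_eq]

variable {α} in
theorem memAdloc_of_memThick (hend : IsFiniteLength
      (Module.End (MonoidAlgebra k G) (CoInd K G p hp α)) (CoInd K G p hp α))
    (hZ : MemThick k K G p α Z) :
    MemAdloc (MonoidAlgebra k G) (chiMod (MonoidAlgebra k G) (CoInd K G p hp α)) Z := by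
  obtain ⟨hfin, hproj⟩ := hZ
  refine ⟨hfin, fun X Y _ _ _ _ _ _ f g hf hfg hg => ?_⟩
  have : Module.Projective (Bp K p) (RestrictAlong α.toRingHom (BaseChange k K G Z)) := hproj
  rw [chiMod_add_eq_iff hend hfg hg, forall_exists_comp_eq_pointModule_iff]
  exact exists_comp_eq_of_projective
    (g := RestrictAlong.map α.toRingHom (BaseChange.map K g)) (BaseChange.map_injective hf)
    (BaseChange.map_exact hfg hg) (BaseChange.map_surjective hg)

variable {α} in
theorem memThick_of_memAdloc [Finite G]
    [hflat : Module.Flat (Bp K p) (RestrictAlong α.toRingHom (MonoidAlgebra K G))]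
    (hend : IsFiniteLength
      (Module.End (MonoidAlgebra k G) (CoInd K G p hp α)) (CoInd K G p hp α))
    (hZ : MemAdloc (MonoidAlgebra k G) (chiMod (MonoidAlgebra k G) (CoInd K G p hp α)) Z) :
    MemThick k K G p α Z := by
  obtain ⟨hfin, hadd⟩ := hZ
  refine ⟨hfin, ?_⟩
  obtain ⟨n, π, hπ⟩ := Module.Finite.exists_fin' (MonoidAlgebra k G) Z
  let ι := (LinearMap.ker π).subtype
  have hexact : Function.Exact ι π := LinearMap.exact_subtype_ker_map π
  have : IsNoetherian (MonoidAlgebra k G) (MonoidAlgebra k G) :=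
    isNoetherian_of_tower k inferInstance
  have hext := (chiMod_add_eq_iff hend hexact hπ).mp <|
    hadd _ _ inferInstance inferInstance ι π Subtype.val_injective hexact hπ
  rw [forall_exists_comp_eq_pointModule_iff] at hext
  have := isLocalRing_Bp K hp
  have := RestrictAlong.isSimpleModule (M := K) (resB_surjective K p hp)
  have := finite_restrictAlong_baseChange k α (LinearMap.ker π)
  have := finite_restrictAlong_baseChange k α (Fin n → MonoidAlgebra k G)
  have := projective_restrictAlong_baseChange k α (Fin n → MonoidAlgebra k G) hp
  exact projective_of_forall_exists_comp_eq
    (g := RestrictAlong.map α.toRingHom (BaseChange.map K π))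
    (BaseChange.map_exact hexact hπ) (BaseChange.map_surjective hπ) hext

end PointModule

theorem statement16_general {k K G : Type} [Field k] [Field K] [Algebra k K] [Group G] [Finite G]
    {p : ℕ} (hp : p ≠ 0) (α : Bp K p →ₐ[K] MonoidAlgebra K G)
    (hflat : Module.Flat (Bp K p) (RestrictAlong α.toRingHom (MonoidAlgebra K G)))
    (hend : IsFiniteLength
      (Module.End (MonoidAlgebra k G) (CoInd K G p hp α)) (CoInd K G p hp α))
    (Z : Type) [AddCommGroup Z] [Module (MonoidAlgebra k G) Z] :
    MemThick k K G p α Z ↔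
      MemAdloc (MonoidAlgebra k G) (chiMod (MonoidAlgebra k G) (CoInd K G p hp α)) Z :=
  ⟨memAdloc_of_memThick hp hend, memThick_of_memAdloc (hflat := hflat) hp hend⟩

/-- Two π-points `α` (over `K`) and `β` (over `L`) with endofinite point
modules `Δ(α)`, `Δ(β)` satisfy `Thick(α) = Thick(β)` if and only if
`Adloc(χ_{Δ(α)}) = Adloc(χ_{Δ(β)})`. -/
theorem statement16 (k K L G : Type) [Field k] [Field K] [Field L]
    [Algebra k K] [Algebra k L] [Group G] [Finite G]
    (p : ℕ) [CharP k p] (hp : 0 < p)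
    (α : Bp K p →ₐ[K] MonoidAlgebra K G) (β : Bp L p →ₐ[L] MonoidAlgebra L G)
    (hflatα : letI : Module (Bp K p) (MonoidAlgebra K G) := Module.compHom _ α.toRingHom
      Module.Flat (Bp K p) (MonoidAlgebra K G))
    (hflatβ : letI : Module (Bp L p) (MonoidAlgebra L G) := Module.compHom _ β.toRingHom
      Module.Flat (Bp L p) (MonoidAlgebra L G))
    (hendα : IsFiniteLength
      (Module.End (MonoidAlgebra k G) (CoInd K G p hp.ne' α))
      (CoInd K G p hp.ne' α))
    (hendβ : IsFiniteLength
      (Module.End (MonoidAlgebra k G) (CoInd L G p hp.ne' β))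
      (CoInd L G p hp.ne' β)) :
    (∀ (M : Type) [AddCommGroup M] [Module (MonoidAlgebra k G) M],
        MemThick k K G p α M ↔ MemThick k L G p β M) ↔
    (∀ (Z : Type) [AddCommGroup Z] [Module (MonoidAlgebra k G) Z],
        MemAdloc (MonoidAlgebra k G) (chiMod (MonoidAlgebra k G) (CoInd K G p hp.ne' α)) Z ↔
        MemAdloc (MonoidAlgebra k G) (chiMod (MonoidAlgebra k G) (CoInd L G p hp.ne' β)) Z) := by
  simp only [statement16_general hp.ne' α hflatα hendα, statement16_general hp.ne' β hflatβ hendβ]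
end
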